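/- arXiv:1411.6354 — 2 statements merged into one kernel-verified Lean document; each statement's English description precedes it below -/
import Mathlib

section
/- Let w be a weight structure on a triangulated category C. Then C_{w≥0} = (C_{w≤−1})^⊥ and C_{w≤0} = ^⊥(C_{w≥1}); that is: an object Y belongs to C_{w≥0} if and only if Hom(X, Y) = 0 for all X ∈ C_{w≤−1}, and an object X belongs to C_{w≤0} if and only if Hom(X, Y) = 0 for all Y ∈ C_{w≥1}. -/
/-!
A weight structure gives a torsion pair `(C_{w≤0}, C_{w≥1})`, and shifting it by `-1` gives the
torsion pair `(C_{w≤-1}, C_{w≥0})`. In a torsion pair `(𝒯, ℱ)` each class is the orthogonal of the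
other: in a decomposition `A → M → B → A[1]` with `A ∈ 𝒯` and `B ∈ ℱ`, the second morphism vanishes
if `M ∈ ^⊥ℱ`, so that `M` is a retract of `A`, and the first one vanishes if `M ∈ 𝒯^⊥`, so that `M`
is a retract of `B`.
-/

open CategoryTheory CategoryTheory.Limits CategoryTheory.Pretriangulated

namespace CWH

/-- `X` is a retract of `Y`. -/
def IsRetract {C : Type*} [Category C] (X Y : C) : Prop :=
  ∃ (i : X ⟶ Y) (r : Y ⟶ X), i ≫ r = 𝟙 X

/-- The Karoubi-closure of a class of objects: all retracts of its objects. -/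
def retractClosure {C : Type*} [Category C] (S : Set C) : Set C :=
  {X : C | ∃ Y ∈ S, IsRetract X Y}

variable (C : Type*) [Category C] [HasZeroObject C] [HasShift C ℤ]
  [Preadditive C] [∀ n : ℤ, (shiftFunctor C n).Additive] [Pretriangulated C]

/-- A weight structure on a (pre)triangulated category (homological convention):
a pair of retract-closed classes `LE = C_{w≤0}` and `GE = C_{w≥0}` such that
`C_{w≤0} ⊆ C_{w≤0}[1]`, `C_{w≥0}[1] ⊆ C_{w≥0}`, `Hom(C_{w≤0}, C_{w≥0}[1]) = 0`,
and every object admits a weight decomposition. -/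
structure WeightStructure where
  LE : Set C
  GE : Set C
  retract_LE : ∀ ⦃X Y : C⦄, IsRetract X Y → Y ∈ LE → X ∈ LE
  retract_GE : ∀ ⦃X Y : C⦄, IsRetract X Y → Y ∈ GE → X ∈ GE
  shift_LE : ∀ ⦃X : C⦄, X ∈ LE → X⟦(-1 : ℤ)⟧ ∈ LE
  shift_GE : ∀ ⦃X : C⦄, X ∈ GE → X⟦(1 : ℤ)⟧ ∈ GE
  orthogonal : ∀ ⦃X Y : C⦄, X ∈ LE → Y ∈ GE → ∀ f : X ⟶ Y⟦(1 : ℤ)⟧, f = 0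
  decomp : ∀ M : C, ∃ (X Y : C) (f : X ⟶ M) (g : M ⟶ Y) (h : Y ⟶ X⟦(1 : ℤ)⟧),
    Triangle.mk f g h ∈ (distTriang C) ∧ X ∈ LE ∧ Y⟦(-1 : ℤ)⟧ ∈ GE

variable {C}

namespace WeightStructure

variable (w : WeightStructure C)

/-- `C_{w≤i} = C_{w≤0}[i]`. -/
def le (i : ℤ) : Set C := {X : C | X⟦(-i)⟧ ∈ w.LE}

/-- `C_{w≥i} = C_{w≥0}[i]`. -/
def ge (i : ℤ) : Set C := {X : C | X⟦(-i)⟧ ∈ w.GE}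

/-- `C_{w=i} = C_{w≤i} ∩ C_{w≥i}`. -/
def eqw (i : ℤ) : Set C := w.le i ∩ w.ge i

/-- `w` is bounded if every object lies in some `C_{w≤i}` and in some `C_{w≥i}`. -/
def IsBounded : Prop := ∀ X : C, (∃ i : ℤ, X ∈ w.le i) ∧ (∃ i : ℤ, X ∈ w.ge i)

end WeightStructure

/-- The extension-closure of a class `S` of objects: the smallest class containing
the zero objects and `S` and closed under extensions (distinguished triangles). -/
inductive ExtClosure (S : Set C) : C → Prop
  | zero (X : C) : IsZero X → ExtClosure S X
  | of (X : C) : X ∈ S → ExtClosure S X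
  | ext {A E B : C} (f : A ⟶ E) (g : E ⟶ B) (h : B ⟶ A⟦(1 : ℤ)⟧) :
      Triangle.mk f g h ∈ (distTriang C) → ExtClosure S A → ExtClosure S B → ExtClosure S E

/-- The smallest full Karoubi-closed (strict) triangulated subcategory containing `S`:
closure under zero objects, shifts, cones and retracts. -/
inductive TriangClosure (S : Set C) : C → Prop
  | of (X : C) : X ∈ S → TriangClosure S X
  | zero (X : C) : IsZero X → TriangClosure S X
  | shift (X : C) (n : ℤ) : TriangClosure S X → TriangClosure S (X⟦n⟧)
  | ext {X Y Z : C} (f : X ⟶ Y) (g : Y ⟶ Z) (h : Z ⟶ X⟦(1 : ℤ)⟧) :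
      Triangle.mk f g h ∈ (distTriang C) → TriangClosure S X → TriangClosure S Y →
      TriangClosure S Z
  | retract (X Y : C) : IsRetract X Y → TriangClosure S Y → TriangClosure S X

/-- A (strict) full triangulated subcategory, given by its class of objects:
it contains the zero objects and is closed under shifts and under the
two-out-of-three property for distinguished triangles. -/
structure IsTriangulatedSub (P : Set C) : Prop where
  zero : ∀ X : C, IsZero X → X ∈ P
  shift : ∀ X ∈ P, ∀ n : ℤ, X⟦n⟧ ∈ P
  ext₂ : ∀ ⦃X Y Z : C⦄ (f : X ⟶ Y) (g : Y ⟶ Z) (h : Z ⟶ X⟦(1 : ℤ)⟧),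
    Triangle.mk f g h ∈ (distTriang C) → X ∈ P → Z ∈ P → Y ∈ P
  ext₃ : ∀ ⦃X Y Z : C⦄ (f : X ⟶ Y) (g : Y ⟶ Z) (h : Z ⟶ X⟦(1 : ℤ)⟧),
    Triangle.mk f g h ∈ (distTriang C) → X ∈ P → Y ∈ P → Z ∈ P
  ext₁ : ∀ ⦃X Y Z : C⦄ (f : X ⟶ Y) (g : Y ⟶ Z) (h : Z ⟶ X⟦(1 : ℤ)⟧),
    Triangle.mk f g h ∈ (distTriang C) → Y ∈ P → Z ∈ P → X ∈ P

/-- A weight structure on the full (triangulated) subcategory of `C` whose objects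
are given by the class `P`; retracts are taken inside `P` and the distinguished
triangles of the subcategory are the distinguished triangles of `C` with vertices
in `P`. -/
structure IsWeightStructureOn (P LEs GEs : Set C) : Prop where
  le_sub : LEs ⊆ P
  ge_sub : GEs ⊆ P
  retract_le : ∀ ⦃X Y : C⦄, X ∈ P → IsRetract X Y → Y ∈ LEs → X ∈ LEs
  retract_ge : ∀ ⦃X Y : C⦄, X ∈ P → IsRetract X Y → Y ∈ GEs → X ∈ GEs
  shift_le : ∀ ⦃X : C⦄, X ∈ LEs → X⟦(-1 : ℤ)⟧ ∈ LEs
  shift_ge : ∀ ⦃X : C⦄, X ∈ GEs → X⟦(1 : ℤ)⟧ ∈ GEs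
  orthogonal : ∀ ⦃X Y : C⦄, X ∈ LEs → Y ∈ GEs → ∀ f : X ⟶ Y⟦(1 : ℤ)⟧, f = 0
  decomp : ∀ M ∈ P, ∃ (X Y : C) (f : X ⟶ M) (g : M ⟶ Y) (h : Y ⟶ X⟦(1 : ℤ)⟧),
    Triangle.mk f g h ∈ (distTriang C) ∧ X ∈ LEs ∧ Y⟦(-1 : ℤ)⟧ ∈ GEs

/-- The class of morphisms of `C` whose cone lies in `P`; the Verdier quotient
`C/P` is the localization of `C` at this class. -/
def coneIn (P : Set C) : MorphismProperty C := fun X Y f =>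
  ∃ (Z : C) (g : Y ⟶ Z) (h : Z ⟶ X⟦(1 : ℤ)⟧),
    Triangle.mk f g h ∈ (distTriang C) ∧ Z ∈ P

/-- A weight Postnikov tower for `M`: choices of weight truncations `trunc l = w_{≤l}M`
(with cones `conePt l = w_{≥l+1}M`), of the connecting morphisms between them that are
compatible with `𝟙 M`, and of the distinguished triangles
`w_{≤l}M → w_{≤l+1}M → M^{-l-1}[l+1] → (w_{≤l}M)[1]`; the objects `termAt l = M^{-l}`
lie in the heart and are the terms of the associated weight complex `t(M)`, whose
boundary morphisms `bd (l+1) l : M^{-l-1} → M^{-l}` are obtained by composing the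
connecting morphisms of two consecutive triangles. -/
structure WeightPostnikovTower (w : WeightStructure C) (M : C) where
  trunc : ℤ → C
  trunc_mem : ∀ l : ℤ, trunc l ∈ w.le l
  ι : ∀ l : ℤ, trunc l ⟶ M
  conePt : ℤ → C
  cone_mem : ∀ l : ℤ, conePt l ∈ w.ge (l + 1)
  coneπ : ∀ l : ℤ, M ⟶ conePt l
  coneδ : ∀ l : ℤ, conePt l ⟶ (trunc l)⟦(1 : ℤ)⟧
  trunc_dist : ∀ l : ℤ, Triangle.mk (ι l) (coneπ l) (coneδ l) ∈ (distTriang C)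
  step : ∀ l : ℤ, trunc l ⟶ trunc (l + 1)
  step_ι : ∀ l : ℤ, step l ≫ ι (l + 1) = ι l
  termAt : ℤ → C
  term_mem : ∀ l : ℤ, termAt l ∈ w.LE ∧ termAt l ∈ w.GE
  sπ : ∀ l : ℤ, trunc l ⟶ (termAt l)⟦l⟧
  sδ : ∀ l : ℤ, (termAt (l + 1))⟦(l + 1 : ℤ)⟧ ⟶ (trunc l)⟦(1 : ℤ)⟧
  step_dist : ∀ l : ℤ, Triangle.mk (step l) (sπ (l + 1)) (sδ l) ∈ (distTriang C)
  bd : ∀ i j : ℤ, termAt i ⟶ termAt j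
  bd_shape : ∀ i j : ℤ, j + 1 ≠ i → bd i j = 0
  bd_eq : ∀ l : ℤ,
    (shiftFunctor C (l + 1)).map (bd (l + 1) l) ≫
      (shiftFunctorAdd' C l 1 (l + 1) rfl).hom.app (termAt l) =
    sδ l ≫ (shiftFunctor C (1 : ℤ)).map (sπ l)

/-- The differential of the weight complex associated to a weight Postnikov tower,
in "homological" indexing: the `l`-th term `termAt l` is the `(-l)`-th term `M^{-l}`
of the weight complex. -/
def towerD {w : WeightStructure C} {M : C} (T : WeightPostnikovTower w M) :
    ∀ l : ℤ, T.termAt (l + 1) ⟶ T.termAt l :=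
  fun l => T.bd (l + 1) l

section Complexes

variable {X Y : ℤ → C}

/-- A morphism of ("homologically indexed") complexes. -/
def IsChainMapDown (X Y : ℤ → C) (dX : ∀ l : ℤ, X (l + 1) ⟶ X l)
    (dY : ∀ l : ℤ, Y (l + 1) ⟶ Y l) (f : ∀ l : ℤ, X l ⟶ Y l) : Prop :=
  ∀ l : ℤ, f (l + 1) ≫ dY l = dX l ≫ f l

/-- Two families of morphisms of complexes are chain homotopic. -/
def ChainHomotopicDown (X Y : ℤ → C) (dX : ∀ l : ℤ, X (l + 1) ⟶ X l)
    (dY : ∀ l : ℤ, Y (l + 1) ⟶ Y l) (f g : ∀ l : ℤ, X l ⟶ Y l) : Prop :=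
  ∃ s : ∀ l : ℤ, X l ⟶ Y (l + 1),
    ∀ l : ℤ, f (l + 1) - g (l + 1) = s (l + 1) ≫ dY (l + 1) + dX l ≫ s l

/-- Two complexes are homotopy equivalent (i.e., isomorphic in the homotopy category). -/
def HomotopyEquivDown (X Y : ℤ → C) (dX : ∀ l : ℤ, X (l + 1) ⟶ X l)
    (dY : ∀ l : ℤ, Y (l + 1) ⟶ Y l) : Prop :=
  ∃ (f : ∀ l : ℤ, X l ⟶ Y l) (g : ∀ l : ℤ, Y l ⟶ X l),
    IsChainMapDown X Y dX dY f ∧ IsChainMapDown Y X dY dX g ∧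
    ChainHomotopicDown X X dX dX (fun l => f l ≫ g l) (fun l => 𝟙 (X l)) ∧
    ChainHomotopicDown Y Y dY dY (fun l => g l ≫ f l) (fun l => 𝟙 (Y l))

end Complexes

namespace IsRetract

lemma of_iso {D : Type*} [Category D] {X Y : D} (e : X ≅ Y) : IsRetract X Y :=
  ⟨e.hom, e.inv, e.hom_inv_id⟩

lemma map {D E : Type*} [Category D] [Category E] {X Y : D} (hXY : IsRetract X Y) (F : D ⥤ E) :
    IsRetract (F.obj X) (F.obj Y) := by
  obtain ⟨i, r, hir⟩ := hXY
  exact ⟨F.map i, F.map r, by rw [← F.map_comp, hir, F.map_id]⟩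

lemma obj₃_of_mor₁_eq_zero {T : Triangle C} (hT : T ∈ distTriang C) (h₁ : T.mor₁ = 0) :
    IsRetract T.obj₂ T.obj₃ := by
  obtain ⟨r, hr⟩ := T.yoneda_exact₂ hT (𝟙 T.obj₂) (by rw [h₁, zero_comp])
  exact ⟨T.mor₂, r, hr.symm⟩

lemma obj₁_of_mor₂_eq_zero {T : Triangle C} (hT : T ∈ distTriang C) (h₂ : T.mor₂ = 0) :
    IsRetract T.obj₂ T.obj₁ := by
  obtain ⟨s, hs⟩ := T.coyoneda_exact₂ hT (𝟙 T.obj₂) (by rw [h₂, comp_zero])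
  exact ⟨s, T.mor₁, hs.symm⟩

end IsRetract

lemma distTriang_of_iso₂ {T : Triangle C} (hT : T ∈ distTriang C) {M : C} (e : T.obj₂ ≅ M) :
    Triangle.mk (T.mor₁ ≫ e.hom) (e.inv ≫ T.mor₂) T.mor₃ ∈ distTriang C := by
  have comm₁ : (T.mor₁ ≫ e.hom) ≫ e.inv = 𝟙 T.obj₁ ≫ T.mor₁ := by simp
  have comm₂ : (e.inv ≫ T.mor₂) ≫ 𝟙 T.obj₃ = e.inv ≫ T.mor₂ := Category.comp_id _
  have comm₃ : T.mor₃ ≫ (𝟙 T.obj₁)⟦(1 : ℤ)⟧' = 𝟙 T.obj₃ ≫ T.mor₃ := by simp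
  exact isomorphic_distinguished T hT _
    (Triangle.isoMk _ T (Iso.refl T.obj₁) e.symm (Iso.refl T.obj₃) comm₁ comm₂ comm₃)

/-- A torsion pair in a pretriangulated category, in the sense of Iyama and Yoshino: two classes of
objects closed under retracts, with no nonzero morphisms from the first to the second, such that
every object is an extension of an object of the second by an object of the first. Both weight
structures and t-structures give rise to torsion pairs. -/
structure IsTorsionPair (𝒯 ℱ : Set C) : Prop where
  retract_left : ∀ ⦃X Y : C⦄, IsRetract X Y → Y ∈ 𝒯 → X ∈ 𝒯
  retract_right : ∀ ⦃X Y : C⦄, IsRetract X Y → Y ∈ ℱ → X ∈ ℱ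
  hom_eq_zero : ∀ ⦃X Y : C⦄, X ∈ 𝒯 → Y ∈ ℱ → ∀ f : X ⟶ Y, f = 0
  decomp : ∀ M : C, ∃ (A B : C) (f : A ⟶ M) (g : M ⟶ B) (h : B ⟶ A⟦(1 : ℤ)⟧),
    Triangle.mk f g h ∈ (distTriang C) ∧ A ∈ 𝒯 ∧ B ∈ ℱ

namespace IsTorsionPair

variable {𝒯 ℱ : Set C}

lemma mem_right_iff (hp : IsTorsionPair 𝒯 ℱ) (Y : C) :
    Y ∈ ℱ ↔ ∀ X ∈ 𝒯, ∀ f : X ⟶ Y, f = 0 := by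
  refine ⟨fun hY X hX => hp.hom_eq_zero hX hY, fun hY => ?_⟩
  obtain ⟨A, B, f, g, h, hT, hA, hB⟩ := hp.decomp Y
  exact hp.retract_right (.obj₃_of_mor₁_eq_zero hT (hY A hA f)) hB

lemma mem_left_iff (hp : IsTorsionPair 𝒯 ℱ) (X : C) :
    X ∈ 𝒯 ↔ ∀ Y ∈ ℱ, ∀ f : X ⟶ Y, f = 0 := by
  refine ⟨fun hX Y hY => hp.hom_eq_zero hX hY, fun hX => ?_⟩
  obtain ⟨A, B, f, g, h, hT, hA, hB⟩ := hp.decomp X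
  exact hp.retract_left (.obj₁_of_mor₂_eq_zero hT (hX B hB g)) hA

lemma shift (hp : IsTorsionPair 𝒯 ℱ) (n : ℤ) :
    IsTorsionPair {X : C | X⟦n⟧ ∈ 𝒯} {Y : C | Y⟦n⟧ ∈ ℱ} where
  retract_left _ _ hXY hY := hp.retract_left (hXY.map (shiftFunctor C n)) hY
  retract_right _ _ hXY hY := hp.retract_right (hXY.map (shiftFunctor C n)) hY
  hom_eq_zero _ _ hX hY f :=
    (shiftFunctor C n).map_eq_zero_iff.1 (hp.hom_eq_zero hX hY (f⟦n⟧'))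
  decomp M := by
    obtain ⟨A, B, f, g, h, hT, hA, hB⟩ := hp.decomp (M⟦n⟧)
    exact ⟨A⟦-n⟧, B⟦-n⟧, _, _, _,
      distTriang_of_iso₂ (Triangle.shift_distinguished _ hT (-n)) (shiftShiftNeg M n),
      hp.retract_left (.of_iso (shiftNegShift A n)) hA,
      hp.retract_right (.of_iso (shiftNegShift B n)) hB⟩

end IsTorsionPair

namespace WeightStructure

lemma isTorsionPair_LE_ge_one (w : WeightStructure C) : IsTorsionPair w.LE (w.ge 1) where
  retract_left := w.retract_LE
  retract_right _ _ hXY hY := w.retract_GE (hXY.map (shiftFunctor C (-1 : ℤ))) hY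
  hom_eq_zero X Y hX hY f := by
    let e : Y⟦(-1 : ℤ)⟧⟦(1 : ℤ)⟧ ≅ Y := shiftNegShift Y (1 : ℤ)
    have hfe : f ≫ e.inv = 0 := w.orthogonal hX hY (f ≫ e.inv)
    exact (cancel_mono e.inv).1 (by rw [hfe, zero_comp])
  decomp := w.decomp

lemma shift_one_mem_ge_one_iff (w : WeightStructure C) (Y : C) :
    Y⟦(1 : ℤ)⟧ ∈ w.ge 1 ↔ Y ∈ w.GE :=
  let e : Y⟦(1 : ℤ)⟧⟦(-1 : ℤ)⟧ ≅ Y := shiftShiftNeg Y (1 : ℤ)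
  ⟨w.retract_GE (.of_iso e.symm), w.retract_GE (.of_iso e)⟩

lemma isTorsionPair_le_neg_one_GE (w : WeightStructure C) :
    IsTorsionPair (w.le (-1)) w.GE := by
  have hGE : {Y : C | Y⟦(1 : ℤ)⟧ ∈ w.ge 1} = w.GE := Set.ext w.shift_one_mem_ge_one_iff
  exact hGE ▸ w.isTorsionPair_LE_ge_one.shift 1

end WeightStructure

theorem statement3_general {𝒯 ℱ : Set C} (hp : IsTorsionPair 𝒯 ℱ) :
    (∀ Y : C, Y ∈ ℱ ↔ ∀ X ∈ 𝒯, ∀ f : X ⟶ Y, f = 0) ∧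
    (∀ X : C, X ∈ 𝒯 ↔ ∀ Y ∈ ℱ, ∀ f : X ⟶ Y, f = 0) :=
  ⟨hp.mem_right_iff, hp.mem_left_iff⟩

/-- `C_{w≥0} = (C_{w≤-1})^⊥` and `C_{w≤0} = ^⊥(C_{w≥1})`. -/
theorem statement3 (w : WeightStructure C) :
    (∀ Y : C, Y ∈ w.GE ↔ ∀ X ∈ w.le (-1), ∀ f : X ⟶ Y, f = 0) ∧
    (∀ X : C, X ∈ w.LE ↔ ∀ Y ∈ w.ge 1, ∀ f : X ⟶ Y, f = 0) :=
  ⟨(statement3_general w.isTorsionPair_le_neg_one_GE).1,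
    (statement3_general w.isTorsionPair_LE_ge_one).2⟩

end CWH
end

section
/- Let w be a weight structure on a triangulated category C, let m ≤ l be integers, let X, X' be objects of C, and fix distinguished triangles w_{≤m}X → X → w_{≥m+1}X → (w_{≤m}X)[1] and w_{≤l}X' → X' → w_{≥l+1}X' → (w_{≤l}X')[1] with w_{≤m}X ∈ C_{w≤m}, w_{≥m+1}X ∈ C_{w≥m+1}, w_{≤l}X' ∈ C_{w≤l}, w_{≥l+1}X' ∈ C_{w≥l+1}. Then any morphism g : X → X' extends to a morphism of these triangles, i.e., there exist morphisms a : w_{≤m}X → w_{≤l}X' and b : w_{≥m+1}X → w_{≥l+1}X' making the two evident squares commute. Moreover, if m < l then the pair (a, b) is unique. -/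
/-!
A morphism `X ⟶ X'` extends to a morphism of distinguished triangles
`(A → X → B) ⟶ (A' → X' → B')` as soon as the composite `A ⟶ X ⟶ X' ⟶ B'` vanishes. Two choices
of `A ⟶ A'` differ by a morphism that factors through `B'⟦-1⟧`, and two choices of `B ⟶ B'` by one
that factors through `A⟦1⟧`. With `A` of weights `≤ m` and `B'` of weights `≥ l + 1`, orthogonality
kills `A ⟶ B'` when `m ≤ l`, and both `A ⟶ B'⟦-1⟧` and `A⟦1⟧ ⟶ B'` when `m < l`.
-/

open CategoryTheory CategoryTheory.Limits CategoryTheory.Pretriangulated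

namespace CWH

variable (C : Type*) [Category C] [HasZeroObject C] [HasShift C ℤ]
  [Preadditive C] [∀ n : ℤ, (shiftFunctor C n).Additive] [Pretriangulated C]

variable {C}

section DistinguishedTriangles

variable {T T' : Triangle C}

lemma exists_triangle_hom_of_comp_eq_zero (hT : T ∈ distTriang C) (hT' : T' ∈ distTriang C)
    (g : T.obj₂ ⟶ T'.obj₂) (hg : T.mor₁ ≫ g ≫ T'.mor₂ = 0) : ∃ φ : T ⟶ T', φ.hom₂ = g := by
  obtain ⟨a, ha⟩ := T'.coyoneda_exact₂ hT' (T.mor₁ ≫ g) (by rw [Category.assoc, hg])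
  obtain ⟨b, hgb, hab⟩ := complete_distinguished_triangle_morphism T T' hT hT' a g ha
  exact ⟨⟨a, g, b, ha, hgb, hab⟩, rfl⟩

lemma comp_mor₁_injective (hT : T ∈ distTriang C) {A : C}
    (hA : ∀ k : A ⟶ T.obj₃⟦(-1 : ℤ)⟧, k = 0) :
    Function.Injective fun a : A ⟶ T.obj₁ => a ≫ T.mor₁ := by
  intro a a' h
  obtain ⟨k, hk⟩ := Triangle.coyoneda_exact₂ _ (inv_rot_of_distTriang T hT) (a - a')
    (show (a - a') ≫ T.mor₁ = 0 by rw [Preadditive.sub_comp, sub_eq_zero.mpr h])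
  obtain rfl : k = 0 := hA k
  exact sub_eq_zero.mp (hk.trans zero_comp)

lemma mor₂_comp_injective (hT : T ∈ distTriang C) {B : C}
    (hB : ∀ k : T.obj₁⟦(1 : ℤ)⟧ ⟶ B, k = 0) :
    Function.Injective fun b : T.obj₃ ⟶ B => T.mor₂ ≫ b := by
  intro b b' h
  obtain ⟨k, hk⟩ := T.yoneda_exact₃ hT (b - b')
    (by rw [Preadditive.comp_sub, sub_eq_zero.mpr h])
  obtain rfl : k = 0 := hB k
  exact sub_eq_zero.mp (hk.trans comp_zero)

end DistinguishedTriangles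

lemma IsRetract.of_iso_s5 {D : Type*} [Category D] {X Y : D} (e : X ≅ Y) : IsRetract X Y :=
  ⟨e.hom, e.inv, e.hom_inv_id⟩

namespace WeightStructure

variable (w : WeightStructure C)

lemma shift_mem_le {X : C} {i : ℤ} (hX : X ∈ w.le i) (n j : ℤ) (h : i + n = j) :
    X⟦n⟧ ∈ w.le j :=
  w.retract_LE (.of_iso ((shiftFunctorAdd' C n (-j) (-i) (by lia)).symm.app X)) hX

lemma shift_mem_ge {X : C} {i : ℤ} (hX : X ∈ w.ge i) (n j : ℤ) (h : i + n = j) :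
    X⟦n⟧ ∈ w.ge j :=
  w.retract_GE (.of_iso ((shiftFunctorAdd' C n (-j) (-i) (by lia)).symm.app X)) hX

lemma ge_antitone : Antitone w.ge :=
  antitone_int_of_succ_le fun i X hX =>
    w.retract_GE (.of_iso ((shiftFunctorAdd' C (-(i + 1)) 1 (-i) (by lia)).app X)) (w.shift_GE hX)

lemma hom_eq_zero {X Y : C} {i j : ℤ} (hij : i < j) (hX : X ∈ w.le i) (hY : Y ∈ w.ge j)
    (f : X ⟶ Y) : f = 0 := by
  have hY' : Y ∈ w.ge (i + 1) := w.ge_antitone hij hY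
  let e := (shiftFunctorAdd' C (-(i + 1)) 1 (-i) (by lia)).app Y
  have hfe : f⟦-i⟧' ≫ e.hom = 0 := w.orthogonal hX hY' _
  exact ((shiftFunctor C (-i)).map_eq_zero_iff).mp
    ((cancel_mono e.hom).mp (hfe.trans zero_comp.symm))

end WeightStructure

theorem statement5_general (w : WeightStructure C) {m l : ℤ} (hml : m ≤ l) {T T' : Triangle C}
    (hT : T ∈ distTriang C) (hT' : T' ∈ distTriang C)
    (h₁ : T.obj₁ ∈ w.le m) (h₃ : T'.obj₃ ∈ w.ge (l + 1)) (g : T.obj₂ ⟶ T'.obj₂) :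
    (∃ φ : T ⟶ T', φ.hom₂ = g) ∧
    (m < l →
      (Function.Injective fun a : T.obj₁ ⟶ T'.obj₁ => a ≫ T'.mor₁) ∧
      Function.Injective fun b : T.obj₃ ⟶ T'.obj₃ => T.mor₂ ≫ b) := by
  refine ⟨exists_triangle_hom_of_comp_eq_zero hT hT' g ?_, fun hlt => ⟨?_, ?_⟩⟩
  · exact w.hom_eq_zero (by lia) h₁ h₃ _
  · exact comp_mor₁_injective hT' (w.hom_eq_zero hlt h₁ (w.shift_mem_ge h₃ (-1) l (by lia)))
  · exact mor₂_comp_injective hT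
      (w.hom_eq_zero (by lia) (w.shift_mem_le h₁ 1 (m + 1) rfl) h₃)

/-- a morphism `g : X ⟶ X'` extends to a morphism of (shifted) weight
decomposition triangles `w_{≤m}X → X → w_{≥m+1}X` and `w_{≤l}X' → X' → w_{≥l+1}X'`
(for `m ≤ l`); if `m < l` this extension is unique. -/
theorem statement5 (w : WeightStructure C) (m l : ℤ) (hml : m ≤ l)
    (X X' Xm Ym Xl Yl : C)
    (am : Xm ⟶ X) (bm : X ⟶ Ym) (cm : Ym ⟶ Xm⟦(1 : ℤ)⟧)
    (hTm : Triangle.mk am bm cm ∈ (distTriang C))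
    (hXm : Xm ∈ w.le m) (hYm : Ym ∈ w.ge (m + 1))
    (al : Xl ⟶ X') (bl : X' ⟶ Yl) (cl : Yl ⟶ Xl⟦(1 : ℤ)⟧)
    (hTl : Triangle.mk al bl cl ∈ (distTriang C))
    (hXl : Xl ∈ w.le l) (hYl : Yl ∈ w.ge (l + 1))
    (g : X ⟶ X') :
    (∃ (a : Xm ⟶ Xl) (b : Ym ⟶ Yl), a ≫ al = am ≫ g ∧ bm ≫ b = g ≫ bl) ∧
    (m < l → ∀ (a a' : Xm ⟶ Xl) (b b' : Ym ⟶ Yl),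
      a ≫ al = am ≫ g → bm ≫ b = g ≫ bl →
      a' ≫ al = am ≫ g → bm ≫ b' = g ≫ bl → a = a' ∧ b = b') := by
  obtain ⟨⟨φ, rfl⟩, hinj⟩ := statement5_general w hml hTm hTl hXm hYl g
  exact ⟨⟨φ.hom₁, φ.hom₃, φ.comm₁.symm, φ.comm₂⟩, fun hlt _ _ _ _ ha hb ha' hb' =>
    ⟨(hinj hlt).1 (ha.trans ha'.symm), (hinj hlt).2 (hb.trans hb'.symm)⟩⟩

end CWH
end
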